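/- Let U be a commutative ring of characteristic 3 with a derivation ∂. Then the Wronskian V^{0,1,2,3}(u₁,…,u₄) = det(∂ⁱuⱼ)_{0≤i≤3} makes U a 4-Lie algebra: V^{0,1,2,3} is alternating and satisfies V(a₁,a₂,a₃, V(b₁,b₂,b₃,b₄)) = Σ_{i=1}^4 V(b₁,…,b_{i−1}, V(a₁,a₂,a₃,bᵢ), b_{i+1},…,b₄) for all a's and b's in U. -/

import Mathlib

/-- The Wronskian `V^{0,1,2,3}(u₁,…,u₄) = det(D^{i-1} u_j)`. -/
def V0123 {U : Type*} [CommRing U] (D : U → U) (u : Fin 4 → U) : U :=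
  (Matrix.of fun r s : Fin 4 => D^[(r : ℕ)] (u s)).det

/-!
By Laplace expansion, a left multiplication of the bracket is a differential operator
`L = c₀ + c₁ ∂ - c' ∂² + c ∂³`, where `c = V^{0,1,2}(a₁, a₂, a₃)`. Summing over the arguments of
the Wronskian, each replaced in turn by its image under `L`, is the same as summing over its rows,
each row `∂^r b` replaced in turn by `∂^r (L b)`, and the latter expand into Wronskians of other
orders. In characteristic `3` the cube `∂³` is a derivation, the coefficients of `V^{0,1,2,3}` add
up to `4 c₀ + 3 c₁' = c₀`, and the sum is exactly `L` applied to `V^{0,1,2,3}(b)`.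
-/

open Function Matrix Finset

section Determinant

variable {ι R A : Type*} [CommRing R] [CommRing A] [Algebra R A]

theorem derivation_prod {M : Type*} [AddCommGroup M] [Module A M] [Module R M] [DecidableEq ι]
    (D : Derivation R A M) (s : Finset ι) (f : ι → A) :
    D (∏ i ∈ s, f i) = ∑ i ∈ s, (∏ j ∈ s.erase i, f j) • D (f i) := by
  induction s using Finset.induction_on with
  | empty => simp
  | insert a s ha ih =>
    have erase_tail : ∀ i ∈ s, (∏ j ∈ (insert a s).erase i, f j) • D (f i) =
        f a • (∏ j ∈ s.erase i, f j) • D (f i) := fun i hi => by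
      rw [erase_insert_of_ne (ne_of_mem_of_not_mem hi ha).symm,
        prod_insert (mt mem_of_mem_erase ha), mul_smul]
    rw [prod_insert ha, D.leibniz, ih, sum_insert ha, erase_insert ha, sum_congr rfl erase_tail,
      smul_sum, add_comm]

variable [Fintype ι] [DecidableEq ι]

theorem derivation_det (D : Derivation R A A) (M : Matrix ι ι A) :
    D M.det = ∑ j, (M.updateCol j fun i => D (M i j)).det := by
  have updated_prod (σ : Equiv.Perm ι) (j : ι) :
      ∏ k, M.updateCol j (fun i => D (M i j)) (σ k) k =
        (∏ k ∈ univ.erase j, M (σ k) k) * D (M (σ j) j) := by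
    rw [← prod_erase_mul _ _ (mem_univ j), updateCol_self]
    congr 1
    exact prod_congr rfl fun k hk => updateCol_ne (ne_of_mem_erase hk)
  simp only [det_apply, map_sum, Units.smul_def, map_zsmul, derivation_prod, updated_prod,
    smul_sum, smul_eq_mul]
  exact sum_comm

/-- Both sides are the trace of `M.adjugate * N`. -/
theorem sum_det_updateCol_eq_sum_det_updateRow (M N : Matrix ι ι A) :
    ∑ j, (M.updateCol j fun i => N i j).det = ∑ i, (M.updateRow i (N i)).det := by
  simp only [← cramer_apply, ← cramer_transpose_apply, cramer_eq_adjugate_mulVec,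
    ← adjugate_transpose, mulVec, dotProduct, transpose_apply]
  exact sum_comm

end Determinant

section Wronskian

variable {ι U : Type*}

/-- The matrix `(∂^{kᵢ} uⱼ)`, for an arbitrary family of orders `kᵢ`. -/
def wronskianMatrix (D : U → U) (k : ι → ℕ) (u : ι → U) : Matrix ι ι U :=
  Matrix.of fun i j => D^[k i] (u j)

/-- The Wronskian `V^{k₁,…,kₙ}(u₁,…,uₙ) = det(∂^{kᵢ} uⱼ)` with arbitrary orders `kᵢ`. -/
def wronskian [CommRing U] [Fintype ι] [DecidableEq ι] (D : U → U) (k : ι → ℕ) (u : ι → U) : U :=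
  (wronskianMatrix D k u).det

@[simp]
theorem wronskianMatrix_apply (D : U → U) (k : ι → ℕ) (u : ι → U) (i j : ι) :
    wronskianMatrix D k u i j = D^[k i] (u j) :=
  rfl

theorem wronskianMatrix_update_args [DecidableEq ι] (D : U → U) (k : ι → ℕ) (u : ι → U) (j : ι)
    (x : U) :
    wronskianMatrix D k (update u j x) =
      (wronskianMatrix D k u).updateCol j fun i => D^[k i] x := by
  ext i j'
  obtain rfl | h := eq_or_ne j' j <;> simp [*]

theorem wronskianMatrix_update_orders [DecidableEq ι] (D : U → U) (k : ι → ℕ) (u : ι → U) (i : ι)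
    (m : ℕ) :
    wronskianMatrix D (update k i m) u =
      (wronskianMatrix D k u).updateRow i fun j => D^[m] (u j) := by
  ext i' j
  obtain rfl | h := eq_or_ne i' i <;> simp [*]

variable [CommRing U]

theorem V0123_eq_wronskian (D : U → U) : V0123 D = wronskian D ![0, 1, 2, 3] := by
  have orders : (fun i : Fin 4 => (i : ℕ)) = ![0, 1, 2, 3] := by decide
  rw [← orders]
  rfl

theorem wronskian_snoc {n : ℕ} (D : U → U) (k : Fin (n + 1) → ℕ) (a : Fin n → U) (x : U) :
    wronskian D k (Fin.snoc a x : Fin (n + 1) → U) =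
      ∑ i : Fin (n + 1), (-1) ^ (i + n : ℕ) * wronskian D (k ∘ i.succAbove) a * D^[k i] x := by
  rw [wronskian, det_succ_column _ (Fin.last n)]
  refine sum_congr rfl fun i _ => ?_
  have minor : (wronskianMatrix D k (Fin.snoc a x : Fin (n + 1) → U)).submatrix
      i.succAbove (Fin.last n).succAbove = wronskianMatrix D (k ∘ i.succAbove) a := by
    ext
    simp
  rw [minor, wronskianMatrix_apply, Fin.snoc_last, Fin.val_last, wronskian, mul_right_comm]

variable [Fintype ι] [DecidableEq ι]

theorem wronskian_eq_zero_of_not_injective_args (D : U → U) (k : ι → ℕ) {u : ι → U}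
    (hu : ¬ Injective u) : wronskian D k u = 0 := by
  obtain ⟨i, j, huij, hij⟩ := not_injective_iff.mp hu
  exact det_zero_of_column_eq hij fun r => by simp [huij]

theorem wronskian_eq_zero_of_not_injective (D : U → U) {k : ι → ℕ} (u : ι → U)
    (hk : ¬ Injective k) : wronskian D k u = 0 := by
  obtain ⟨i, j, hkij, hij⟩ := not_injective_iff.mp hk
  exact det_zero_of_row_eq hij (by ext; simp [hkij])

theorem wronskian_comp_perm (D : U → U) (k : ι → ℕ) (u : ι → U) (σ : Equiv.Perm ι) :
    wronskian D (k ∘ σ) u = Equiv.Perm.sign σ * wronskian D k u :=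
  det_permute σ (wronskianMatrix D k u)

/-- The Wronskian `V^{k₁,…,kₙ}(u₁,…,uₙ)` with its `i`-th row `(∂^{kᵢ} uⱼ)ⱼ` replaced by `(P uⱼ)ⱼ`,
as a linear function of the operator `P`. -/
def wronskianReplaceRow (D : U → U) (k : ι → ℕ) (u : ι → U) (i : ι) : (U → U) →ₗ[U] U :=
  detRowAlternating.toMultilinearMap.toLinearMap (wronskianMatrix D k u) i ∘ₗ
    LinearMap.funLeft U U u

theorem wronskianReplaceRow_iterate (D : U → U) (k : ι → ℕ) (u : ι → U) (i : ι) (m : ℕ) :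
    wronskianReplaceRow D k u i D^[m] = wronskian D (update k i m) u := by
  rw [wronskian, wronskianMatrix_update_orders]
  rfl

theorem sum_wronskian_update_args (D L : U → U) (k : ι → ℕ) (u : ι → U) :
    ∑ j, wronskian D k (update u j (L (u j))) =
      ∑ i, wronskianReplaceRow D k u i (D^[k i] ∘ L) := by
  simp only [wronskian, wronskianMatrix_update_args]
  exact sum_det_updateCol_eq_sum_det_updateRow _ fun i j => D^[k i] (L (u j))

theorem derivation_wronskian {R : Type*} [CommRing R] [Algebra R U] (E : Derivation R U U)
    {D : U → U} {s : ℕ} (hE : ⇑E = D^[s]) (k : ι → ℕ) (u : ι → U) :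
    E (wronskian D k u) = ∑ i, wronskian D (update k i (s + k i)) u := by
  simp only [wronskian, wronskianMatrix_update_orders, derivation_det, wronskianMatrix_apply, hE,
    ← iterate_add_apply]
  exact sum_det_updateCol_eq_sum_det_updateRow _ fun i j => D^[s + k i] (u j)

end Wronskian

section PrimePower

variable {R A : Type*} [CommRing R] [CommRing A] [Algebra R A]

open TensorProduct in
/-- `D ∘ μ = μ ∘ (D ⊗ 1 + 1 ⊗ D)` for the multiplication `μ`, and the two summands
commute, so that the `p`-th power of their sum is the sum of their `p`-th powers modulo `p`. -/
theorem derivation_pow_prime_mul (D : Derivation R A A) {p : ℕ} (hp : p.Prime)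
    (hpA : (p : A) = 0) (x y : A) :
    ((D : Module.End R A) ^ p) (x * y) =
      x • ((D : Module.End R A) ^ p) y + y • ((D : Module.End R A) ^ p) x := by
  let d : Module.End R A := D
  let μ := LinearMap.mul' R A
  have leibniz : d ∘ₗ μ = μ ∘ₗ (d.rTensor A + d.lTensor A) := by
    ext
    simp [d, μ, add_comm, mul_comm]
  have comm : Commute (d.rTensor A) (d.lTensor A) := by
    ext
    simp
  obtain ⟨r, hr⟩ := comm.exists_add_pow_prime_eq hp
  have remainder (t : A ⊗[R] A) : μ ((p : Module.End R (A ⊗[R] A)) t) = 0 := by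
    rw [Module.End.natCast_apply, map_nsmul, nsmul_eq_mul, hpA, zero_mul]
  have key := LinearMap.congr_fun (Module.End.commute_pow_left_of_commute leibniz p) (x ⊗ₜ y)
  rw [hr, mul_assoc, mul_assoc, LinearMap.comp_apply, LinearMap.comp_apply, LinearMap.add_apply,
    Module.End.mul_apply, map_add, remainder, add_zero] at key
  simpa [LinearMap.rTensor_pow, LinearMap.lTensor_pow, μ, d, mul_comm, add_comm] using key

/-- The `p`-th iterate of a derivation of a ring in which the prime `p` vanishes. -/
def primePowDerivation (D : Derivation R A A) {p : ℕ} (hp : p.Prime) (hpA : (p : A) = 0) :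
    Derivation R A A :=
  .mk' ((D : Module.End R A) ^ p) (derivation_pow_prime_mul D hp hpA)

theorem coe_primePowDerivation (D : Derivation R A A) {p : ℕ} (hp : p.Prime)
    (hpA : (p : A) = 0) : ⇑(primePowDerivation D hp hpA) = D^[p] :=
  Module.End.coe_pow (D : Module.End R A) p

end PrimePower

theorem update_vec_four {α : Type*} (a b c d x : α) :
    update ![a, b, c, d] 0 x = ![x, b, c, d] ∧ update ![a, b, c, d] 1 x = ![a, x, c, d] ∧
      update ![a, b, c, d] 2 x = ![a, b, x, d] ∧ update ![a, b, c, d] 3 x = ![a, b, c, x] := by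
  refine ⟨?_, ?_, ?_, ?_⟩ <;> ext i <;> fin_cases i <;> rfl

section ThirdOrder

variable {R U : Type*} [CommRing R] [CommRing U] [Algebra R U] (D : Derivation R U U)

theorem derivation_wronskian_012 (u : Fin 3 → U) :
    D (wronskian D ![0, 1, 2] u) = wronskian D ![0, 1, 3] u := by
  have orders : update ![0, 1, 2] 2 3 = ![0, 1, 3] := by decide
  rw [derivation_wronskian D (iterate_one D).symm, Fin.sum_univ_three]
  simp (disch := decide) only [wronskian_eq_zero_of_not_injective, zero_add]
  simp [orders]

theorem derivation_wronskian_0123 (u : Fin 4 → U) :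
    D (wronskian D ![0, 1, 2, 3] u) = wronskian D ![0, 1, 2, 4] u := by
  rw [derivation_wronskian D (iterate_one D).symm, Fin.sum_univ_four]
  simp (disch := decide) only [wronskian_eq_zero_of_not_injective, zero_add]
  simp [update_vec_four]

theorem iterate_two_derivation_wronskian_0123 (u : Fin 4 → U) :
    D^[2] (wronskian D ![0, 1, 2, 3] u) =
      wronskian D ![0, 1, 2, 5] u - wronskian D ![0, 1, 4, 3] u := by
  have swap_orders : ![0, 1, 3, 4] = ![0, 1, 4, 3] ∘ Equiv.swap 2 3 := by decide
  have swapped : wronskian D ![0, 1, 3, 4] u = -wronskian D ![0, 1, 4, 3] u := by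
    rw [swap_orders, wronskian_comp_perm]
    simp
  rw [iterate_succ_apply, iterate_one, derivation_wronskian_0123,
    derivation_wronskian D (iterate_one D).symm, Fin.sum_univ_four]
  simp (disch := decide) only [wronskian_eq_zero_of_not_injective, zero_add]
  simp [update_vec_four, swapped, sub_eq_neg_add]

theorem iterate_three_derivation_wronskian_0123 (h3 : (3 : U) = 0) (u : Fin 4 → U) :
    D^[3] (wronskian D ![0, 1, 2, 3] u) =
      wronskian D ![0, 4, 2, 3] u + wronskian D ![0, 1, 5, 3] u + wronskian D ![0, 1, 2, 6] u := by
  have cube := coe_primePowDerivation D Nat.prime_three (by exact_mod_cast h3)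
  rw [← cube, derivation_wronskian _ cube, Fin.sum_univ_four]
  simp (disch := decide) only [wronskian_eq_zero_of_not_injective, zero_add]
  simp [update_vec_four]

/-- The differential operator `c₀ + c₁ ∂ - c' ∂² + c ∂³`, the shape taken by the left
multiplications of the bracket `V^{0,1,2,3}`. -/
def thirdOrderOperator (D : U → U) (c₀ c₁ c : U) : U → U :=
  c₀ • D^[0] + c₁ • D^[1] - D c • D^[2] + c • D^[3]

theorem iterate_one_comp_thirdOrderOperator (c₀ c₁ c : U) :
    D^[1] ∘ thirdOrderOperator D c₀ c₁ c =
      D c₀ • D^[0] + (c₀ + D c₁) • D^[1] + (c₁ - D^[2] c) • D^[2] + c • D^[4] := by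
  ext x
  simp only [thirdOrderOperator, Function.comp_apply, Pi.add_apply, Pi.sub_apply, Pi.smul_apply,
    smul_eq_mul, iterate_succ_apply, iterate_zero_apply, map_add, map_sub, D.leibniz]
  ring

theorem iterate_two_comp_thirdOrderOperator (c₀ c₁ c : U) :
    D^[2] ∘ thirdOrderOperator D c₀ c₁ c =
      D^[2] c₀ • D^[0] + (2 * D c₀ + D^[2] c₁) • D^[1] + (c₀ + 2 * D c₁ - D^[3] c) • D^[2] +
        (c₁ - D^[2] c) • D^[3] + D c • D^[4] + c • D^[5] := by
  ext x
  simp only [thirdOrderOperator, Function.comp_apply, Pi.add_apply, Pi.sub_apply, Pi.smul_apply,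
    smul_eq_mul, iterate_succ_apply, iterate_zero_apply, map_add, map_sub, D.leibniz]
  ring

theorem iterate_three_comp_thirdOrderOperator (h3 : (3 : U) = 0) (c₀ c₁ c : U) :
    D^[3] ∘ thirdOrderOperator D c₀ c₁ c =
      D^[3] c₀ • D^[0] + D^[3] c₁ • D^[1] - D^[4] c • D^[2] + (c₀ + D^[3] c) • D^[3] +
        c₁ • D^[4] - D c • D^[5] + c • D^[6] := by
  have cube := coe_primePowDerivation D Nat.prime_three (by exact_mod_cast h3)
  ext x
  rw [← cube]
  simp only [thirdOrderOperator, Function.comp_apply, Pi.add_apply, Pi.sub_apply, Pi.smul_apply,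
    smul_eq_mul, map_add, map_sub, Derivation.leibniz]
  simp only [cube, iterate_succ_apply, iterate_zero_apply]
  ring

theorem sum_wronskian_update_thirdOrderOperator (h3 : (3 : U) = 0) (c₀ c₁ c : U)
    (u : Fin 4 → U) :
    ∑ j, wronskian D ![0, 1, 2, 3] (update u j (thirdOrderOperator D c₀ c₁ c (u j))) =
      thirdOrderOperator D c₀ c₁ c (wronskian D ![0, 1, 2, 3] u) := by
  have image : thirdOrderOperator D c₀ c₁ c (wronskian D ![0, 1, 2, 3] u) =
      c₀ * wronskian D ![0, 1, 2, 3] u + c₁ * wronskian D ![0, 1, 2, 4] u -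
        D c * (wronskian D ![0, 1, 2, 5] u - wronskian D ![0, 1, 4, 3] u) +
        c * (wronskian D ![0, 4, 2, 3] u + wronskian D ![0, 1, 5, 3] u +
          wronskian D ![0, 1, 2, 6] u) := by
    rw [← iterate_three_derivation_wronskian_0123 D h3, ← iterate_two_derivation_wronskian_0123,
      ← derivation_wronskian_0123]
    rfl
  rw [sum_wronskian_update_args, Fin.sum_univ_four, image]
  change wronskianReplaceRow D _ u 0 (thirdOrderOperator D c₀ c₁ c) +
    wronskianReplaceRow D _ u 1 (D^[1] ∘ _) + wronskianReplaceRow D _ u 2 (D^[2] ∘ _) +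
    wronskianReplaceRow D _ u 3 (D^[3] ∘ _) = _
  rw [iterate_one_comp_thirdOrderOperator, iterate_two_comp_thirdOrderOperator,
    iterate_three_comp_thirdOrderOperator D h3, thirdOrderOperator]
  simp only [map_add, map_sub, map_smul, smul_eq_mul, wronskianReplaceRow_iterate, update_vec_four]
  simp (disch := decide) only [wronskian_eq_zero_of_not_injective]
  linear_combination (c₀ + D c₁) * wronskian D ![0, 1, 2, 3] u * h3

theorem V0123_snoc (a : Fin 3 → U) (x : U) :
    V0123 D (Fin.snoc a x) =
      thirdOrderOperator D (-wronskian D ![1, 2, 3] a) (wronskian D ![0, 2, 3] a)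
        (wronskian D ![0, 1, 2] a) x := by
  have minor₀ : ![0, 1, 2, 3] ∘ Fin.succAbove (0 : Fin 4) = ![1, 2, 3] := by decide
  have minor₁ : ![0, 1, 2, 3] ∘ Fin.succAbove (1 : Fin 4) = ![0, 2, 3] := by decide
  have minor₂ : ![0, 1, 2, 3] ∘ Fin.succAbove (2 : Fin 4) = ![0, 1, 3] := by decide
  have minor₃ : ![0, 1, 2, 3] ∘ Fin.succAbove (3 : Fin 4) = ![0, 1, 2] := by decide
  rw [V0123_eq_wronskian, wronskian_snoc, Fin.sum_univ_four, minor₀, minor₁, minor₂, minor₃,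
    thirdOrderOperator, derivation_wronskian_012]
  simp only [Fin.coe_ofNat_eq_mod, Matrix.cons_val, Pi.add_apply, Pi.sub_apply, Pi.smul_apply,
    smul_eq_mul]
  ring

end ThirdOrder

theorem exists_derivation_coe_eq {U : Type*} [CommRing U] {D : U → U}
    (hadd : ∀ a b : U, D (a + b) = D a + D b)
    (hleib : ∀ a b : U, D (a * b) = D a * b + a * D b) :
    ∃ δ : Derivation ℤ U U, ⇑δ = D :=
  ⟨.mk' (AddMonoidHom.mk' D hadd).toIntLinearMap fun a b => by
    simp [hleib, mul_comm, add_comm], rfl⟩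

/-- In a commutative ring `U` of characteristic 3 with derivation `D`, the Wronskian
`V^{0,1,2,3}` makes `U` a 4-Lie algebra: it is alternating and satisfies the Filippov
identity. -/
theorem stmt_10 (U : Type*) [CommRing U] (h3 : (3 : U) = 0) (D : U → U)
    (hadd : ∀ a b : U, D (a + b) = D a + D b)
    (hleib : ∀ a b : U, D (a * b) = D a * b + a * D b) :
    (∀ (u : Fin 4 → U) (i j : Fin 4), i ≠ j → u i = u j → V0123 D u = 0) ∧
    (∀ (a : Fin 3 → U) (b : Fin 4 → U),
      V0123 D (Fin.snoc a (V0123 D b)) =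
        ∑ i : Fin 4, V0123 D (Function.update b i (V0123 D (Fin.snoc a (b i))))) := by
  obtain ⟨δ, rfl⟩ := exists_derivation_coe_eq hadd hleib
  refine ⟨fun u i j hij huij => ?_, fun a b => ?_⟩
  · rw [V0123_eq_wronskian]
    exact wronskian_eq_zero_of_not_injective_args _ _ fun hu => hij (hu huij)
  · simp only [V0123_snoc]
    rw [V0123_eq_wronskian, sum_wronskian_update_thirdOrderOperator δ h3]
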